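/- arXiv:2301.13200 — 3 statements merged into one kernel-verified Lean document; each statement's English description precedes it below -/
import Mathlib

section
/- Let r > 0 and let g : ℂ → ℂ be holomorphic and injective on {z ∈ ℂ : |z| > r}, satisfy g(conj z) = conj(g z) for all |z| > r, and satisfy g(z) − z → 0 as |z| → ∞ (along the cobounded filter on ℂ). Let R > r. Then (1/π) ∫_{θ=0}^{π} log|g'(R·exp(iθ))| dθ = 0, where g' denotes the complex derivative of g. -/
/-!
Being univalent, `g` has a non-vanishing derivative, so `w ↦ log |g' (1 / w)|` is harmonic on the
punctured disc `0 < |w| < 1 / r`. Cauchy's estimates turn the normalization at infinity into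
`g' → 1`, so the puncture is removable with value `log 1 = 0`, and by the mean value property the
average of `log |g'|` over the full circle `|z| = R` vanishes. The symmetry of `g` makes the
contributions of the two semicircles equal.

That an injective holomorphic function `f` has no critical point is seen on its inverse: the inverse
is continuous by the open mapping theorem and differentiable off the isolated critical values, hence
differentiable everywhere by removability, which a zero of `f'` would contradict.
-/

open Asymptotics Bornology Complex Filter Function Metric Real Set Topology
open scoped ComplexConjugate

section Injective

variable {f : ℂ → ℂ} {U : Set ℂ} {z : ℂ}

theorem nhds_le_map_of_injOn (hf : AnalyticAt ℂ f z) (hU : U ∈ 𝓝 z) (hinj : InjOn f U) :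
    𝓝 (f z) ≤ map f (𝓝 z) := by
  refine hf.eventually_constant_or_nhds_le_map_nhds.resolve_left fun hconst ↦ ?_
  obtain ⟨w, ⟨hwz, hwU⟩, hne⟩ :=
    (((hconst.and hU).filter_mono nhdsWithin_le_nhds).and
      (self_mem_nhdsWithin : ∀ᶠ w in 𝓝[≠] z, w ≠ z)).exists
  exact hne (hinj hwU (mem_of_mem_nhds hU) hwz)

theorem continuousAt_invFunOn (hf : AnalyticAt ℂ f z) (hU : U ∈ 𝓝 z) (hinj : InjOn f U) :
    ContinuousAt (invFunOn f U) (f z) := by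
  have hleft : invFunOn f U ∘ f =ᶠ[𝓝 z] id := by
    filter_upwards [hU] with w hw using hinj.leftInvOn_invFunOn hw
  have hz : invFunOn f U (f z) = z := hleft.self_of_nhds
  rw [ContinuousAt, hz]
  exact (tendsto_map'_iff.mpr (tendsto_id.congr' hleft.symm)).mono_left
    (nhds_le_map_of_injOn hf hU hinj)

theorem comp_invFunOn_eventuallyEq_id (hf : AnalyticAt ℂ f z) (hU : U ∈ 𝓝 z)
    (hinj : InjOn f U) : f ∘ invFunOn f U =ᶠ[𝓝 (f z)] id := by
  have hright : f ∘ invFunOn f U =ᶠ[map f (𝓝 z)] id :=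
    eventually_map.mpr <| by filter_upwards [hU] with w hw using invFunOn_eq ⟨w, hw, rfl⟩
  exact hright.filter_mono (nhds_le_map_of_injOn hf hU hinj)

theorem hasDerivAt_invFunOn (hf : AnalyticAt ℂ f z) (hf' : deriv f z ≠ 0) (hU : U ∈ 𝓝 z)
    (hinj : InjOn f U) : HasDerivAt (invFunOn f U) (deriv f z)⁻¹ (f z) := by
  have hz : invFunOn f U (f z) = z := hinj.leftInvOn_invFunOn (mem_of_mem_nhds hU)
  exact .of_local_left_inverse (continuousAt_invFunOn hf hU hinj)
    (hz.symm ▸ hf.differentiableAt.hasDerivAt) hf' (comp_invFunOn_eventuallyEq_id hf hU hinj)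

theorem eventually_deriv_ne_zero_of_injOn (hf : AnalyticAt ℂ f z) (hU : U ∈ 𝓝 z)
    (hinj : InjOn f U) : ∀ᶠ w in 𝓝[≠] z, deriv f w ≠ 0 := by
  refine hf.deriv.eventually_eq_zero_or_eventually_ne_zero.resolve_left fun hzero ↦ ?_
  obtain ⟨ε, hε, hball⟩ := Metric.eventually_nhds_iff_ball.mp
    ((hzero.and hf.eventually_analyticAt).and hU)
  obtain ⟨w, hw, hwz⟩ : ∃ w ∈ ball z ε, w ≠ z :=
    nonempty_of_mem (f := 𝓝[≠] z)
      (inter_mem (mem_nhdsWithin_of_mem_nhds (ball_mem_nhds z hε)) self_mem_nhdsWithin)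
  have hz := mem_ball_self (x := z) hε
  have hconst : f w = f z := isOpen_ball.is_const_of_deriv_eq_zero isPreconnected_ball
    (fun v hv ↦ (hball v hv).1.2.differentiableAt.differentiableWithinAt)
    (fun v hv ↦ (hball v hv).1.1) hw hz
  exact hwz (hinj (hball w hw).2 (hball z hz).2 hconst)

theorem differentiableAt_invFunOn (hf : AnalyticAt ℂ f z) (hU : U ∈ 𝓝 z) (hinj : InjOn f U) :
    DifferentiableAt ℂ (invFunOn f U) (f z) := by
  have hoff : ∀ᶠ w in 𝓝 z, w ≠ z → DifferentiableAt ℂ (invFunOn f U) (f w) := by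
    filter_upwards [eventually_nhdsWithin_iff.mp (eventually_deriv_ne_zero_of_injOn hf hU hinj),
      hf.eventually_analyticAt, eventually_mem_nhds_iff.mpr hU] with w hw' hw hwU hne
    exact (hasDerivAt_invFunOn hw (hw' hne) hwU hinj).differentiableAt
  have himage : ∀ᶠ y in map f (𝓝 z), y ≠ f z → DifferentiableAt ℂ (invFunOn f U) y :=
    eventually_map.mpr (hoff.mono fun w hw hne ↦ hw (ne_of_apply_ne f hne))
  exact (analyticAt_of_differentiable_on_punctured_nhds_of_continuousAt
    (eventually_nhdsWithin_iff.mpr (himage.filter_mono (nhds_le_map_of_injOn hf hU hinj)))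
    (continuousAt_invFunOn hf hU hinj)).differentiableAt

theorem deriv_ne_zero_of_injOn (hf : AnalyticAt ℂ f z) (hU : U ∈ 𝓝 z) (hinj : InjOn f U) :
    deriv f z ≠ 0 := by
  intro hzero
  have hz : invFunOn f U (f z) = z := hinj.leftInvOn_invFunOn (mem_of_mem_nhds hU)
  have hderiv : HasDerivAt f 0 (invFunOn f U (f z)) := by
    rw [hz, ← hzero]
    exact hf.differentiableAt.hasDerivAt
  exact not_differentiableAt_of_local_left_inverse_hasDerivAt_zero hderiv
    (comp_invFunOn_eventuallyEq_id hf hU hinj) (differentiableAt_invFunOn hf hU hinj)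

end Injective

section Infinity

variable {E : Type*} [NormedAddCommGroup E]

theorem eventually_cobounded_forall_mem_closedBall_half {P : E → Prop}
    (hP : ∀ᶠ z in cobounded E, P z) :
    ∀ᶠ z in cobounded E, ∀ w ∈ closedBall z (‖z‖ / 2), P w := by
  obtain ⟨N, -, hN⟩ := hasBasis_cobounded_norm.eventually_iff.mp hP
  filter_upwards [eventually_cobounded_le_norm (2 * N)] with z hz w hw
  have hzw : ‖z‖ - ‖w‖ ≤ ‖z‖ / 2 :=
    (norm_sub_norm_le z w).trans (mem_closedBall_iff_norm'.mp hw)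
  exact hN (show N ≤ ‖w‖ by linarith)

theorem tendsto_deriv_cobounded_of_isLittleO_id [NormedSpace ℂ E] {f : ℂ → E}
    (hf : ∀ᶠ z in cobounded ℂ, DifferentiableAt ℂ f z)
    (ho : f =o[cobounded ℂ] (id : ℂ → ℂ)) : Tendsto (deriv f) (cobounded ℂ) (𝓝 0) := by
  rw [Metric.tendsto_nhds]
  intro ε hε
  filter_upwards [eventually_cobounded_forall_mem_closedBall_half
    (hf.and (ho.bound (show 0 < ε / 4 by positivity))), eventually_cobounded_le_norm 1]
    with z hball hz
  have hdiff : DiffContOnCl ℂ f (ball z (‖z‖ / 2)) :=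
    DifferentiableOn.diffContOnCl fun w hw ↦
      (hball w (closure_ball_subset_closedBall hw)).1.differentiableWithinAt
  have hbound : ∀ w ∈ sphere z (‖z‖ / 2), ‖f w‖ ≤ ε / 4 * (3 / 2 * ‖z‖) := by
    intro w hw
    have hw' := sphere_subset_closedBall hw
    calc ‖f w‖ ≤ ε / 4 * ‖w‖ := (hball w hw').2
      _ ≤ ε / 4 * (3 / 2 * ‖z‖) := by
        gcongr
        linarith [norm_le_of_mem_closedBall hw']
  rw [dist_zero_right]
  calc ‖deriv f z‖ ≤ ε / 4 * (3 / 2 * ‖z‖) / (‖z‖ / 2) :=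
        norm_deriv_le_of_forall_mem_sphere_norm_le (by positivity) hdiff hbound
    _ = 3 / 4 * ε := by field
    _ < ε := by linarith

theorem tendsto_deriv_cobounded_of_sub_id_isLittleO {g : ℂ → ℂ}
    (hg : ∀ᶠ z in cobounded ℂ, DifferentiableAt ℂ g z)
    (hnorm : (fun z ↦ g z - z) =o[cobounded ℂ] (id : ℂ → ℂ)) :
    Tendsto (deriv g) (cobounded ℂ) (𝓝 1) := by
  have hsub := tendsto_deriv_cobounded_of_isLittleO_id
    (hg.mono fun z hz ↦ hz.fun_sub differentiableAt_fun_id) hnorm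
  refine tendsto_sub_nhds_zero_iff.mp (hsub.congr' ?_)
  filter_upwards [hg] with z hz
  rw [deriv_fun_sub hz differentiableAt_fun_id, deriv_id'']

theorem le_norm_inv_of_mem_closedBall {𝕜 : Type*} [NormedDivisionRing 𝕜] {w : 𝕜} {R : ℝ}
    (hR : 0 < R) (hw : w ∈ closedBall 0 R⁻¹) (hw₀ : w ≠ 0) : R ≤ ‖w⁻¹‖ := by
  rw [norm_inv]
  exact (le_inv_comm₀ hR (norm_pos_iff.mpr hw₀)).mpr (mem_closedBall_zero_iff.mp hw)

theorem analyticOnNhd_update_comp_inv [NormedSpace ℂ E] [CompleteSpace E] {f : ℂ → E} {R : ℝ}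
    {L : E} (hR : 0 < R) (hf : AnalyticOnNhd ℂ f {z | R ≤ ‖z‖})
    (hL : Tendsto f (cobounded ℂ) (𝓝 L)) :
    AnalyticOnNhd ℂ (update (f ·⁻¹) 0 L) (closedBall 0 R⁻¹) := by
  have hpunctured : ∀ w ∈ closedBall (0 : ℂ) R⁻¹, w ≠ 0 →
      AnalyticAt ℂ (update (f ·⁻¹) 0 L) w := by
    intro w hw hw₀
    refine ((hf w⁻¹ (le_norm_inv_of_mem_closedBall hR hw hw₀)).fun_comp
      (analyticAt_inv hw₀)).congr ?_
    filter_upwards [isOpen_ne.mem_nhds hw₀] with v hv using (update_of_ne hv L (f ·⁻¹)).symm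
  intro w hw
  rcases eq_or_ne w 0 with rfl | hw₀
  · refine analyticAt_of_differentiable_on_punctured_nhds_of_continuousAt ?_
      (continuousAt_update_same.mpr (hL.comp tendsto_inv₀_nhdsNE_zero))
    filter_upwards [mem_nhdsWithin_of_mem_nhds (closedBall_mem_nhds 0 (inv_pos.mpr hR)),
      self_mem_nhdsWithin] with v hv hv₀ using (hpunctured v hv hv₀).differentiableAt
  · exact hpunctured w hw hw₀

end Infinity

section CircleAverage

variable {E : Type*} [NormedAddCommGroup E] [NormedSpace ℝ E]

theorem circleAverage_comp_inv (f : ℂ → E) (R : ℝ) :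
    circleAverage (f ·⁻¹) 0 R = circleAverage f 0 R⁻¹ := by
  rw [circleAverage_eq_circleAverage_zero_one, circleAverage_eq_circleAverage_zero_one (R := R⁻¹),
    ← circleAverage_zero_one_congr_inv]
  simp [mul_comm]

theorem circleAverage_log_norm_of_tendsto_cobounded {f : ℂ → ℂ} {R : ℝ} {L : ℂ} (hR : 0 < R)
    (hf : AnalyticOnNhd ℂ f {z | R ≤ ‖z‖}) (hf₀ : ∀ z, R ≤ ‖z‖ → f z ≠ 0)
    (hL : Tendsto f (cobounded ℂ) (𝓝 L)) (hL₀ : L ≠ 0) :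
    circleAverage (fun z ↦ Real.log ‖f z‖) 0 R = Real.log ‖L‖ := by
  set F : ℂ → ℂ := update (f ·⁻¹) 0 L
  have hF_zero : F 0 = L := update_self ..
  have hF : ∀ w ≠ 0, F w = f w⁻¹ := fun w hw ↦ update_of_ne hw _ _
  have habs : |R⁻¹| = R⁻¹ := abs_of_pos (inv_pos.mpr hR)
  have hF_ne : ∀ w ∈ closedBall 0 |R⁻¹|, F w ≠ 0 := by
    intro w hw
    rcases eq_or_ne w 0 with rfl | hw₀
    · rwa [hF_zero]
    · rw [hF w hw₀]
      exact hf₀ _ (le_norm_inv_of_mem_closedBall hR (habs ▸ hw) hw₀)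
  calc circleAverage (fun z ↦ Real.log ‖f z‖) 0 R
      = circleAverage (fun w ↦ Real.log ‖f w⁻¹‖) 0 R⁻¹ := by
        rw [circleAverage_comp_inv (fun z ↦ Real.log ‖f z‖), inv_inv]
    _ = circleAverage (fun w ↦ Real.log ‖F w‖) 0 R⁻¹ :=
        circleAverage_congr_sphere fun w hw ↦ by
          simp only [hF w (ne_of_mem_sphere hw (by positivity))]
    _ = Real.log ‖F 0‖ :=
        (habs ▸ analyticOnNhd_update_comp_inv hR hf hL).circleAverage_log_norm_of_ne_zero hF_ne
    _ = Real.log ‖L‖ := by rw [hF_zero]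

theorem integral_neg_self_of_even {f : ℝ → E} (hf : f.Even) (a : ℝ) :
    ∫ x in -a..a, f x = (2 : ℝ) • ∫ x in 0..a, f x := by
  have hneg : ∫ x in -a..0, f x = ∫ x in 0..a, f x := by
    simpa [hf _] using intervalIntegral.integral_comp_neg (a := -a) (b := 0) f
  by_cases hint : IntervalIntegrable f MeasureTheory.volume 0 a
  · have hint_neg : IntervalIntegrable f MeasureTheory.volume (-a) 0 := by
      simpa [hf _] using ((IntervalIntegrable.iff_comp_neg (by finiteness)).mp hint).symm
    rw [← intervalIntegral.integral_add_adjacent_intervals hint_neg hint, hneg, two_smul]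
  · have hzero : (0 : ℝ) ∈ uIcc (-a) a := by
      rcases le_total 0 a with ha | ha <;> simp [ha]
    have hint_symm : ¬IntervalIntegrable f MeasureTheory.volume (-a) a := fun h ↦
      hint (h.mono_set (uIcc_subset_uIcc hzero right_mem_uIcc))
    rw [intervalIntegral.integral_undef hint, intervalIntegral.integral_undef hint_symm, smul_zero]

theorem circleAverage_eq_integral_zero_pi_of_conj {φ : ℂ → E} {c R : ℝ}
    (hφ : ∀ z ∈ sphere (c : ℂ) |R|, φ (conj z) = φ z) :
    circleAverage φ c R = π⁻¹ • ∫ θ in 0..π, φ (circleMap c R θ) := by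
  have heven : (fun θ ↦ φ (circleMap c R θ)).Even := fun θ ↦ by
    simpa [conj_circleMap] using hφ _ (circleMap_mem_sphere' c R θ)
  calc circleAverage φ c R = (2 * π)⁻¹ • ∫ θ in -π..π, φ (circleMap c R θ) := by
        rw [circleAverage_eq_integral_add (-π),
          intervalIntegral.integral_comp_add_right (fun θ ↦ φ (circleMap c R θ))]
        congr 2 <;> ring
    _ = π⁻¹ • ∫ θ in 0..π, φ (circleMap c R θ) := by
        rw [integral_neg_self_of_even heven, smul_smul]
        congr 1
        field

end CircleAverage

theorem deriv_conj_of_eventually {g : ℂ → ℂ} {z : ℂ}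
    (hg : ∀ᶠ w in 𝓝 z, g (conj w) = conj (g w)) : deriv g (conj z) = conj (deriv g z) := by
  have hreflect : conj ∘ g ∘ conj =ᶠ[𝓝 z] g := by
    filter_upwards [hg] with w hw
    rw [comp_apply, comp_apply, hw, conj_conj]
  rw [← hreflect.deriv_eq, deriv_conj_conj, comp_apply, comp_apply, conj_conj]

theorem log_deriv_avg_semicircle_zero_general {r R : ℝ} (hR₀ : 0 < R) (hR : r < R) {g : ℂ → ℂ}
    (hg : DifferentiableOn ℂ g {z : ℂ | r < ‖z‖})
    (hg' : ∀ z : ℂ, R ≤ ‖z‖ → deriv g z ≠ 0)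
    (hsym : ∀ z : ℂ, r < ‖z‖ → g (conj z) = conj (g z))
    (hnorm : (fun z ↦ g z - z) =o[cobounded ℂ] (id : ℂ → ℂ)) :
    (1 / π) * ∫ θ in (0 : ℝ)..π, Real.log ‖deriv g (R * Complex.exp (θ * I))‖ = 0 := by
  have hopen : IsOpen {z : ℂ | r < ‖z‖} := isOpen_lt continuous_const continuous_norm
  have hderiv : AnalyticOnNhd ℂ (deriv g) {z | R ≤ ‖z‖} :=
    (hg.analyticOnNhd hopen).deriv.mono fun z hz ↦ hR.trans_le hz
  have hlim : Tendsto (deriv g) (cobounded ℂ) (𝓝 1) := by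
    refine tendsto_deriv_cobounded_of_sub_id_isLittleO ?_ hnorm
    filter_upwards [eventually_cobounded_le_norm R] with z hz
    exact hg.differentiableAt (hopen.mem_nhds (hR.trans_le hz))
  have hconj : ∀ z ∈ sphere ((0 : ℝ) : ℂ) |R|,
      Real.log ‖deriv g (conj z)‖ = Real.log ‖deriv g z‖ := by
    intro z hz
    have hz_norm : ‖z‖ = R := by simpa [abs_of_pos hR₀] using hz
    have hz_nhds : {z : ℂ | r < ‖z‖} ∈ 𝓝 z := hopen.mem_nhds (hR.trans_eq hz_norm.symm)
    rw [deriv_conj_of_eventually (eventually_of_mem hz_nhds hsym), norm_conj]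
  have hcircle := circleAverage_log_norm_of_tendsto_cobounded hR₀ hderiv hg' hlim one_ne_zero
  have hsemicircle := circleAverage_eq_integral_zero_pi_of_conj
    (φ := fun z ↦ Real.log ‖deriv g z‖) hconj
  simpa [hcircle, circleMap_zero] using hsemicircle.symm

/-- Second claim of Lemma 4.3: for the Schwarz-reflection extension `g`
(holomorphic and injective on `{|z| > r}`, commuting with conjugation, with
hydrodynamic normalization `g(z) − z → 0` at `∞`), the average of `log|g'|`
over the semicircle of radius `R > r` vanishes. -/
theorem log_deriv_avg_semicircle_zero (r R : ℝ) (hr : 0 < r) (hR : r < R)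
    (g : ℂ → ℂ)
    (hg : DifferentiableOn ℂ g {z : ℂ | r < ‖z‖})
    (hinj : Set.InjOn g {z : ℂ | r < ‖z‖})
    (hsym : ∀ z : ℂ, r < ‖z‖ → g ((starRingEnd ℂ) z) = (starRingEnd ℂ) (g z))
    (hnorm : Filter.Tendsto (fun z => g z - z) (Bornology.cobounded ℂ) (nhds 0)) :
    (1 / Real.pi) * ∫ θ in (0:ℝ)..Real.pi,
        Real.log ‖deriv g ((R : ℂ) * Complex.exp ((θ : ℂ) * Complex.I))‖
      = 0 := by
  have hnhds : ∀ z : ℂ, R ≤ ‖z‖ → {z : ℂ | r < ‖z‖} ∈ 𝓝 z := fun z hz ↦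
    (isOpen_lt continuous_const continuous_norm).mem_nhds (hR.trans_le hz)
  exact log_deriv_avg_semicircle_zero_general (hr.trans hR) hR hg
    (fun z hz ↦ deriv_ne_zero_of_injOn (hg.analyticAt (hnhds z hz)) (hnhds z hz) hinj) hsym
    (((isLittleO_one_iff ℂ).mpr hnorm).trans (isLittleO_const_id_cobounded 1))
end

section
/- Let x₀ ∈ ℝ and ε > 0, let U ⊆ ℂ be an open set containing the closed ball of radius ε around x₀, and let g : ℂ → ℂ be holomorphic and injective on U with g(x) ∈ ℝ for every real x ∈ [x₀−ε, x₀+ε] and Im(g(v)) > 0 for every v in the closed ball with Im(v) > 0. Then (1/π) ∫_{θ=0}^{π} G(g(x₀), g(x₀ + ε·exp(iθ))) dθ = −2·log ε − 2·log|g'(x₀)|, where g' denotes the complex derivative of g. -/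
/-- The free-boundary Green function of the upper half-plane (without
normalization at infinity): `G(z,w) = −log|z−w| − log|z − conj w|`. -/
noncomputable def greenG (z w : ℂ) : ℝ :=
  -Real.log ‖z - w‖ - Real.log ‖z - (starRingEnd ℂ) w‖

/-!
Since `g` is real on the diameter, `G(g x₀, g z) = -2 log |g z - g x₀|`, and Schwarz reflection
makes this function invariant under conjugation, so its average over the upper semicircle is its
average over the whole circle. There `|g z - g x₀| = ε |dslope g x₀ z|`, and `log |dslope g x₀ ·|`
is harmonic, with value `log |g' x₀|` at the center, as soon as `dslope g x₀` has no zeros in the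
ball.

The absence of zeros rests on positivity. By reflection, `Im g z` has the sign of `Im z`. On a
circle of radius `R` centered at a real point `t`, we have `R² / (z - t) = conj (z - t)`, so the
function `(R² / (z - t) - (z - t)) (g z - g t)`, which is holomorphic with value `R² g' t` at `t`,
has real part `2 Im z Im g z ≥ 0` there. The mean value property gives `Re g' t > 0`. Hence `g` is
strictly increasing on the diameter, and off the diameter it takes nonreal values.
-/

open Filter Metric Real Set Topology
open scoped ComplexConjugate

theorem norm_conj_sub_of_im_eq_zero {z : ℂ} (hz : z.im = 0) (w : ℂ) :
    ‖conj w - z‖ = ‖w - z‖ := by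
  rw [← Complex.norm_conj (w - z), map_sub, Complex.conj_eq_iff_im.mpr hz]

theorem greenG_of_im_eq_zero {z : ℂ} (hz : z.im = 0) (w : ℂ) :
    greenG z w = -2 * log ‖w - z‖ := by
  rw [greenG, norm_sub_rev z, norm_sub_rev z, norm_conj_sub_of_im_eq_zero hz]
  ring

theorem analyticAt_conj_conj {f : ℂ → ℂ} {z : ℂ} (hf : AnalyticAt ℂ f (conj z)) :
    AnalyticAt ℂ (fun w ↦ conj (f (conj w))) z := by
  rw [Complex.analyticAt_iff_eventually_differentiableAt] at hf ⊢
  filter_upwards [Complex.continuous_conj.continuousAt.eventually hf] with w hw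
  simpa only [Complex.conj_conj] using! hw.conj_conj

theorem apply_conj_of_frequently_im_eq_zero {f : ℂ → ℂ} {s : Set ℂ} {x : ℝ}
    (hf : AnalyticOnNhd ℂ f s) (hs : IsPreconnected s) (hsymm : ∀ z ∈ s, conj z ∈ s)
    (hx : (x : ℂ) ∈ s) (hreal : ∃ᶠ t : ℝ in 𝓝[≠] x, (f t).im = 0) {z : ℂ} (hz : z ∈ s) :
    f (conj z) = conj (f z) := by
  have hreflected : AnalyticOnNhd ℂ (fun w ↦ conj (f (conj w))) s :=
    fun w hw ↦ analyticAt_conj_conj (hf _ (hsymm w hw))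
  have hofReal : Tendsto ((↑) : ℝ → ℂ) (𝓝[≠] x) (𝓝[≠] (x : ℂ)) :=
    Complex.continuous_ofReal.continuousWithinAt.tendsto_nhdsWithin
      fun t ht ↦ Complex.ofReal_injective.ne ht
  have hagree : ∃ᶠ w in 𝓝[≠] (x : ℂ), f w = conj (f (conj w)) :=
    hofReal.frequently <| hreal.mono fun t ht ↦ by
      rw [Complex.conj_ofReal, Complex.conj_eq_iff_im.mpr ht]
  simpa only [Complex.conj_conj] using
    hf.eqOn_of_preconnected_of_frequently_eq hreflected hs hx hagree (hsymm z hz)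

theorem analyticOnNhd_dslope {E : Type*} [NormedAddCommGroup E] [NormedSpace ℂ E]
    [CompleteSpace E] {f : ℂ → E} {s : Set ℂ} {c : ℂ} (hf : AnalyticOnNhd ℂ f s) (hc : c ∈ s) :
    AnalyticOnNhd ℂ (dslope f c) s := by
  have hopen : IsOpen {z | AnalyticAt ℂ f z} := isOpen_analyticAt ℂ f
  have hdiff : DifferentiableOn ℂ f {z | AnalyticAt ℂ f z} :=
    fun z hz ↦ hz.differentiableAt.differentiableWithinAt
  exact (((Complex.differentiableOn_dslope (hopen.mem_nhds (hf c hc))).mpr hdiff).analyticOnNhd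
    hopen).mono hf

theorem circleAverage_log_norm_sub_apply_center {g : ℂ → ℂ} {c : ℂ} {R : ℝ} (hR : R ≠ 0)
    (hg : AnalyticOnNhd ℂ g (closedBall c |R|)) (hderiv : deriv g c ≠ 0)
    (hne : ∀ z ∈ closedBall c |R|, z ≠ c → g z ≠ g c) :
    circleAverage (fun z ↦ log ‖g z - g c‖) c R = log R + log ‖deriv g c‖ := by
  have hslope : AnalyticOnNhd ℂ (dslope g c) (closedBall c |R|) :=
    analyticOnNhd_dslope hg (mem_closedBall_self (abs_nonneg R))
  have hslope_ne : ∀ z ∈ closedBall c |R|, dslope g c z ≠ 0 := by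
    intro z hz
    rcases eq_or_ne z c with rfl | hzc
    · rwa [dslope_same]
    · refine right_ne_zero_of_smul (a := z - c) ?_
      rw [sub_smul_dslope]
      exact sub_ne_zero.mpr (hne z hz hzc)
  have hfactor : EqOn (fun z ↦ log ‖g z - g c‖) (fun z ↦ log R + log ‖dslope g c z‖)
      (sphere c |R|) := by
    intro z hz
    have hnorm : ‖z - c‖ = |R| := mem_sphere_iff_norm.mp hz
    beta_reduce
    rw [← sub_smul_dslope, norm_smul, hnorm, log_mul (abs_ne_zero.mpr hR)
      (norm_ne_zero_iff.mpr (hslope_ne z (sphere_subset_closedBall hz))), log_abs]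
  have hint : CircleIntegrable (fun z ↦ log ‖dslope g c z‖) c R :=
    (hslope.mono sphere_subset_closedBall).meromorphicOn.circleIntegrable_log_norm
  rw [circleAverage_congr_sphere hfactor,
    circleAverage_fun_add (circleIntegrable_const _ _ _) hint, circleAverage_const,
    hslope.circleAverage_log_norm_of_ne_zero hslope_ne, dslope_same]

theorem integral_zero_pi_eq_smul_circleAverage {E : Type*} [NormedAddCommGroup E]
    [NormedSpace ℝ E] {f : ℂ → E} {x R : ℝ} (hf : CircleIntegrable f x R)
    (hsymm : ∀ z ∈ sphere (x : ℂ) |R|, f (conj z) = f z) :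
    ∫ θ in 0..π, f (circleMap x R θ) = π • circleAverage f x R := by
  have heven : ∀ θ, f (circleMap x R (-θ)) = f (circleMap x R θ) := fun θ ↦ by
    simpa only [conj_circleMap, Complex.conj_ofReal] using hsymm _ (circleMap_mem_sphere' x R θ)
  have hupper : IntervalIntegrable (fun θ ↦ f (circleMap x R θ)) MeasureTheory.volume 0 π :=
    IntervalIntegrable.mono_set hf <| by
      rw [uIcc_of_le pi_nonneg, uIcc_of_le two_pi_pos.le]
      exact Icc_subset_Icc_right (by linarith [pi_pos])
  have hlower : IntervalIntegrable (fun θ ↦ f (circleMap x R θ)) MeasureTheory.volume (-π) 0 := by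
    rw [IntervalIntegrable.iff_comp_neg]
    simpa only [heven, neg_neg, neg_zero] using hupper.symm
  have hreflect : ∫ θ in -π..0, f (circleMap x R θ) = ∫ θ in 0..π, f (circleMap x R θ) := by
    simpa only [heven, neg_zero] using
      (intervalIntegral.integral_comp_neg (a := 0) (b := π) fun θ ↦ f (circleMap x R θ)).symm
  have hperiod : ∫ θ in 0..2 * π, f (circleMap x R θ) = ∫ θ in -π..π, f (circleMap x R θ) := by
    have := ((periodic_circleMap (x : ℂ) R).comp f).intervalIntegral_add_eq 0 (-π)
    simpa only [Function.comp_apply, zero_add, show -π + 2 * π = π by ring] using this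
  rw [circleAverage_def, hperiod, ← intervalIntegral.integral_add_adjacent_intervals hlower hupper,
    hreflect, ← two_smul ℝ, smul_smul, smul_smul, show π * (2 * π)⁻¹ * 2 = 1 by field_simp,
    one_smul]

theorem circleAverage_im_sub_mul_im_sub {g : ℂ → ℂ} {c : ℂ} {R : ℝ}
    (hg : AnalyticOnNhd ℂ g (closedBall c |R|)) :
    circleAverage (fun z ↦ (z - c).im * (g z - g c).im) c R = R ^ 2 / 2 * (deriv g c).re := by
  let F : ℂ → ℂ := fun z ↦ R ^ 2 * dslope g c z - (z - c) * (g z - g c)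
  have hslope : AnalyticOnNhd ℂ (dslope g c) (closedBall c |R|) :=
    analyticOnNhd_dslope hg (mem_closedBall_self (abs_nonneg R))
  have hF : AnalyticOnNhd ℂ F (closedBall c |R|) :=
    (analyticOnNhd_const.mul hslope).sub
      ((analyticOnNhd_id.sub analyticOnNhd_const).mul (hg.sub analyticOnNhd_const))
  have hF_center : circleAverage F c R = ((R ^ 2 : ℝ) : ℂ) * deriv g c := by
    rw [(hF.differentiableOn.mono closure_ball_subset_closedBall).diffContOnCl.circleAverage]
    simp [F]
  have hF_sphere : EqOn (fun z ↦ (z - c).im * (g z - g c).im)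
      ((1 / 2 : ℝ) • (Complex.reCLM ∘ F)) (sphere c |R|) := by
    intro z hz
    have hsq : (R : ℂ) ^ 2 = conj (z - c) * (z - c) := by
      rw [Complex.conj_mul', mem_sphere_iff_norm.mp hz]
      exact_mod_cast (sq_abs R).symm
    have hFz : F z = (conj (z - c) - (z - c)) * (g z - g c) := by
      simp only [F, hsq, ← sub_smul_dslope g c z, smul_eq_mul]
      ring
    simp only [Pi.smul_apply, Function.comp_apply, Complex.reCLM_apply, smul_eq_mul, hFz,
      Complex.mul_re, Complex.sub_re, Complex.sub_im, Complex.conj_re, Complex.conj_im]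
    ring
  have hF_int : CircleIntegrable F c R :=
    (hF.continuousOn.mono sphere_subset_closedBall).circleIntegrable'
  rw [circleAverage_congr_sphere hF_sphere, circleAverage_smul,
    Complex.reCLM.circleAverage_comp_comm hF_int, hF_center, Complex.reCLM_apply,
    Complex.re_ofReal_mul, smul_eq_mul]
  ring

theorem circleAverage_pos {f : ℂ → ℝ} {c : ℂ} {R : ℝ} (hf : ContinuousOn f (sphere c |R|))
    (hnonneg : ∀ z ∈ sphere c |R|, 0 ≤ f z) (hpos : ∃ z ∈ sphere c |R|, 0 < f z) :
    0 < circleAverage f c R := by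
  obtain ⟨z, hz, hfz⟩ := hpos
  rw [← image_circleMap_Ioc] at hz
  obtain ⟨θ, hθ, rfl⟩ := hz
  refine mul_pos (inv_pos.mpr two_pi_pos) <|
    intervalIntegral.integral_pos two_pi_pos ?_ (fun _ _ ↦ hnonneg _ (circleMap_mem_sphere' ..))
      ⟨θ, Ioc_subset_Icc_self hθ, hfz⟩
  exact hf.comp (continuous_circleMap c R).continuousOn fun _ _ ↦ circleMap_mem_sphere' ..

theorem deriv_re_pos_of_im_mul_im_pos {g : ℂ → ℂ} {x R : ℝ} (hR : 0 < R)
    (hg : AnalyticOnNhd ℂ g (closedBall x R)) (hx : (g x).im = 0)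
    (hsign : ∀ z ∈ sphere (x : ℂ) R, z.im ≠ 0 → 0 < z.im * (g z).im) :
    0 < (deriv g x).re := by
  rw [← abs_of_pos hR] at hg hsign
  have hpos : 0 < circleAverage (fun z ↦ (z - x).im * (g z - g x).im) x R := by
    simp only [Complex.sub_im, Complex.ofReal_im, hx, sub_zero]
    refine circleAverage_pos ?_ (fun z hz ↦ ?_) ⟨x + R * Complex.I, ?_, ?_⟩
    · exact Complex.continuous_im.continuousOn.mul
        (Complex.continuous_im.comp_continuousOn (hg.continuousOn.mono sphere_subset_closedBall))
    · rcases eq_or_ne z.im 0 with hzim | hzim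
      · rw [hzim, zero_mul]
      · exact (hsign z hz hzim).le
    · simp
    · exact hsign _ (by simp) (by simpa using hR.ne')
  rw [circleAverage_im_sub_mul_im_sub hg] at hpos
  exact pos_of_mul_pos_right hpos (by positivity)

theorem strictMonoOn_re_ofReal {g : ℂ → ℂ} {a b : ℝ}
    (hg : ∀ t ∈ Icc a b, DifferentiableAt ℂ g (t : ℂ))
    (hderiv : ∀ t ∈ Ioo a b, 0 < (deriv g (t : ℂ)).re) :
    StrictMonoOn (fun t : ℝ ↦ (g t).re) (Icc a b) := by
  have hderiv_re : ∀ t ∈ Icc a b, HasDerivAt (fun t : ℝ ↦ (g t).re) (deriv g (t : ℂ)).re t :=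
    fun t ht ↦ (hg t ht).hasDerivAt.real_of_complex
  refine strictMonoOn_of_deriv_pos (convex_Icc a b)
    (fun t ht ↦ (hderiv_re t ht).continuousAt.continuousWithinAt) fun t ht ↦ ?_
  rw [interior_Icc] at ht
  rw [(hderiv_re t (Ioo_subset_Icc_self ht)).deriv]
  exact hderiv t ht

theorem im_mul_im_pos_of_apply_conj {g : ℂ → ℂ} {s : Set ℂ} (hs : ∀ z ∈ s, conj z ∈ s)
    (hconj : ∀ z ∈ s, g (conj z) = conj (g z)) (him : ∀ z ∈ s, 0 < z.im → 0 < (g z).im)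
    {z : ℂ} (hz : z ∈ s) (hz_im : z.im ≠ 0) : 0 < z.im * (g z).im := by
  rcases hz_im.lt_or_gt with hneg | hpos
  · have hconj_pos : 0 < (g (conj z)).im :=
      him _ (hs z hz) (by rw [Complex.conj_im]; exact neg_pos.mpr hneg)
    rw [hconj z hz, Complex.conj_im, neg_pos] at hconj_pos
    exact mul_pos_of_neg_of_neg hneg hconj_pos
  · exact mul_pos hpos (him z hz hpos)

theorem conj_mem_closedBall_ofReal {x R : ℝ} {z : ℂ} (hz : z ∈ closedBall (x : ℂ) R) :
    conj z ∈ closedBall (x : ℂ) R := by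
  rwa [mem_closedBall, Complex.dist_conj_comm, Complex.conj_ofReal]

section ClosedBall

variable {g : ℂ → ℂ} {x R : ℝ}

theorem apply_conj_of_mem_closedBall (hR : 0 < R) (hg : AnalyticOnNhd ℂ g (closedBall x R))
    (hreal : ∀ t ∈ Icc (x - R) (x + R), (g (t : ℂ)).im = 0)
    {z : ℂ} (hz : z ∈ closedBall (x : ℂ) R) : g (conj z) = conj (g z) := by
  have hreal_near : ∀ᶠ t : ℝ in 𝓝 x, (g t).im = 0 := by
    filter_upwards [Icc_mem_nhds (sub_lt_self x hR) (lt_add_of_pos_right x hR)] with t ht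
    exact hreal t ht
  exact apply_conj_of_frequently_im_eq_zero hg (convex_closedBall _ _).isPreconnected
    (fun w hw ↦ conj_mem_closedBall_ofReal hw) (mem_closedBall_self hR.le)
    (hreal_near.filter_mono nhdsWithin_le_nhds).frequently hz

theorem deriv_re_pos_of_mem_Ioo (hg : AnalyticOnNhd ℂ g (closedBall x R))
    (hreal : ∀ t ∈ Icc (x - R) (x + R), (g (t : ℂ)).im = 0)
    (hsign : ∀ z ∈ closedBall (x : ℂ) R, z.im ≠ 0 → 0 < z.im * (g z).im)
    {t : ℝ} (ht : t ∈ Ioo (x - R) (x + R)) :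
    0 < (deriv g (t : ℂ)).re := by
  have hr : 0 < R - |t - x| := by
    rw [sub_pos, abs_lt]
    constructor <;> linarith [ht.1, ht.2]
  have hsub : closedBall (t : ℂ) (R - |t - x|) ⊆ closedBall x R :=
    closedBall_subset_closedBall' <| by
      rw [Complex.dist_of_im_eq (by simp)]
      simp [Real.dist_eq]
  exact deriv_re_pos_of_im_mul_im_pos hr (hg.mono hsub) (hreal t (Ioo_subset_Icc_self ht))
    fun z hz ↦ hsign z (hsub (sphere_subset_closedBall hz))

theorem apply_ne_apply_ofReal (hg : AnalyticOnNhd ℂ g (closedBall x R))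
    (hreal : ∀ t ∈ Icc (x - R) (x + R), (g (t : ℂ)).im = 0)
    (hsign : ∀ z ∈ closedBall (x : ℂ) R, z.im ≠ 0 → 0 < z.im * (g z).im)
    {t : ℝ} (ht : t ∈ Icc (x - R) (x + R)) {z : ℂ}
    (hz : z ∈ closedBall (x : ℂ) R) (hzt : z ≠ t) : g z ≠ g t := by
  have hmem : ∀ u : ℝ, (u : ℂ) ∈ closedBall (x : ℂ) R ↔ u ∈ Icc (x - R) (x + R) := fun u ↦ by
    rw [← Real.closedBall_eq_Icc, mem_closedBall, mem_closedBall, Complex.dist_of_im_eq (by simp)]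
    simp
  rcases eq_or_ne z.im 0 with hz_im | hz_im
  · lift z to ℝ using hz_im
    have hmono : StrictMonoOn (fun u : ℝ ↦ (g u).re) (Icc (x - R) (x + R)) :=
      strictMonoOn_re_ofReal (fun u hu ↦ (hg u ((hmem u).mpr hu)).differentiableAt)
        fun u hu ↦ deriv_re_pos_of_mem_Ioo hg hreal hsign hu
    exact fun h ↦ hzt (congrArg _ (hmono.injOn ((hmem z).mp hz) ht (congrArg Complex.re h)))
  · exact fun h ↦ right_ne_zero_of_mul (hsign z hz hz_im).ne' (h ▸ hreal t ht)

end ClosedBall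

theorem green_selfavg_boundary_general {x₀ ε : ℝ} (hε : 0 < ε) {g : ℂ → ℂ}
    (hg : AnalyticOnNhd ℂ g (closedBall x₀ ε))
    (hreal : ∀ x ∈ Icc (x₀ - ε) (x₀ + ε), (g (x : ℂ)).im = 0)
    (him : ∀ v ∈ closedBall (x₀ : ℂ) ε, 0 < v.im → 0 < (g v).im) :
    (1 / π) * ∫ θ in 0..π, greenG (g x₀) (g (circleMap x₀ ε θ))
      = -2 * log ε - 2 * log ‖deriv g (x₀ : ℂ)‖ := by
  have hx₀ : x₀ ∈ Ioo (x₀ - ε) (x₀ + ε) := ⟨sub_lt_self x₀ hε, lt_add_of_pos_right x₀ hε⟩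
  have hgx₀ : (g x₀).im = 0 := hreal x₀ (Ioo_subset_Icc_self hx₀)
  have hconj : ∀ z ∈ closedBall (x₀ : ℂ) ε, g (conj z) = conj (g z) :=
    fun z hz ↦ apply_conj_of_mem_closedBall hε hg hreal hz
  have hsign : ∀ z ∈ closedBall (x₀ : ℂ) ε, z.im ≠ 0 → 0 < z.im * (g z).im :=
    fun z hz ↦ im_mul_im_pos_of_apply_conj (fun w hw ↦ conj_mem_closedBall_ofReal hw) hconj him hz
  have hderiv : deriv g x₀ ≠ 0 :=
    fun h ↦ (deriv_re_pos_of_mem_Ioo hg hreal hsign hx₀).ne' (by rw [h, Complex.zero_re])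
  have hne : ∀ z ∈ closedBall (x₀ : ℂ) ε, z ≠ x₀ → g z ≠ g x₀ :=
    fun z hz ↦ apply_ne_apply_ofReal hg hreal hsign (Ioo_subset_Icc_self hx₀) hz
  have hhalf : ∫ θ in 0..π, log ‖g (circleMap x₀ ε θ) - g x₀‖
      = π • circleAverage (fun z ↦ log ‖g z - g x₀‖) x₀ ε := by
    rw [← abs_of_pos hε] at hg hconj
    refine integral_zero_pi_eq_smul_circleAverage (f := fun z ↦ log ‖g z - g x₀‖) ?_ fun z hz ↦ ?_
    · exact ((hg.mono sphere_subset_closedBall).sub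
        analyticOnNhd_const).meromorphicOn.circleIntegrable_log_norm
    · rw [hconj z (sphere_subset_closedBall hz), norm_conj_sub_of_im_eq_zero hgx₀]
  rw [← abs_of_pos hε] at hg hne
  simp only [greenG_of_im_eq_zero hgx₀, intervalIntegral.integral_const_mul]
  rw [hhalf, circleAverage_log_norm_sub_apply_center hε.ne' hg hderiv hne, smul_eq_mul]
  field_simp
  ring

/-- Boundary variance computation from the proof of Lemma 6.4: if `g` is
holomorphic and injective on an open set containing `closedBall x₀ ε`
(`x₀ ∈ ℝ`), maps `[x₀−ε, x₀+ε]` into `ℝ` and the upper part of the ball into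
`ℍ`, then the average of `G(g(x₀), g(·))` on the upper semicircle
`∂B_ε(x₀) ∩ ℍ` equals `−2 log ε − 2 log|g'(x₀)|`. -/
theorem green_selfavg_boundary (x₀ : ℝ) (ε : ℝ) (hε : 0 < ε)
    (U : Set ℂ) (hU : IsOpen U) (hball : Metric.closedBall (x₀ : ℂ) ε ⊆ U)
    (g : ℂ → ℂ) (hg : DifferentiableOn ℂ g U) (hinj : Set.InjOn g U)
    (hreal : ∀ x : ℝ, x ∈ Set.Icc (x₀ - ε) (x₀ + ε) → (g (x : ℂ)).im = 0)
    (him : ∀ v ∈ Metric.closedBall (x₀ : ℂ) ε, 0 < v.im → 0 < (g v).im) :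
    (1 / Real.pi) * ∫ θ in (0:ℝ)..Real.pi,
        greenG (g (x₀ : ℂ)) (g ((x₀ : ℂ) + (ε : ℂ) * Complex.exp ((θ : ℂ) * Complex.I)))
      = -2 * Real.log ε - 2 * Real.log ‖deriv g (x₀ : ℂ)‖ :=
  green_selfavg_boundary_general hε ((hg.analyticOnNhd hU).mono hball) hreal him
end

section
/- Let z₁, z₂ ∈ ℂ and ε > 0 with |z₁ − z₂| > 2ε, let U ⊆ ℂ be an open set containing the closed balls of radius ε around z₁ and around z₂, and let g : ℂ → ℂ be holomorphic and injective on U with Im(g(v)) > 0 for every v in either closed ball. Then (1/(2π))² ∫_{θ=0}^{2π} ∫_{φ=0}^{2π} G(g(z₁ + ε·exp(iθ)), g(z₂ + ε·exp(iφ))) dφ dθ = G(g(z₁), g(z₂)). -/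
/-!
With one argument fixed, `greenG` is minus a sum of two terms `log ‖· - a‖`, hence harmonic along an
analytic map that avoids both poles `a`. Since it is symmetric, this applies in either variable, and
the mean value property evaluates first the inner and then the outer circle average at the centre.
Injectivity together with disjointness of the balls keeps the values of `g` off the pole on the
diagonal; positivity of imaginary parts keeps them off its mirror image.
-/

open InnerProductSpace Metric ComplexConjugate

section CircleAverage

variable {E : Type*} [NormedAddCommGroup E] [NormedSpace ℝ E]

theorem circleAverage_circleAverage_eq_smul_integral (F : ℂ → ℂ → E) (c₁ c₂ : ℂ) (R₁ R₂ : ℝ) :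
    Real.circleAverage (fun v ↦ Real.circleAverage (F v) c₂ R₂) c₁ R₁ =
      (1 / (2 * Real.pi)) ^ 2 • ∫ θ in (0 : ℝ)..2 * Real.pi, ∫ φ in (0 : ℝ)..2 * Real.pi,
        F (circleMap c₁ R₁ θ) (circleMap c₂ R₂ φ) := by
  simp only [Real.circleAverage_def, intervalIntegral.integral_smul, smul_smul, one_div, sq]

theorem circleAverage_circleAverage_eq_of_harmonicOnNhd [CompleteSpace E]
    {F : ℂ → ℂ → E} {c₁ c₂ : ℂ} {R₁ R₂ : ℝ}
    (h₁ : HarmonicOnNhd (F · c₂) (closedBall c₁ |R₁|))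
    (h₂ : ∀ v ∈ sphere c₁ |R₁|, HarmonicOnNhd (F v) (closedBall c₂ |R₂|)) :
    Real.circleAverage (fun v ↦ Real.circleAverage (F v) c₂ R₂) c₁ R₁ = F c₁ c₂ := by
  rw [Real.circleAverage_congr_sphere fun v hv ↦ (h₂ v hv).circleAverage_eq]
  exact h₁.circleAverage_eq

end CircleAverage

theorem ne_conj_of_im_pos {z w : ℂ} (hz : 0 < z.im) (hw : 0 < w.im) : z ≠ conj w := by
  rintro rfl
  rw [Complex.conj_im] at hz
  linarith

theorem greenG_comm (z w : ℂ) : greenG z w = greenG w z := by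
  have norm_sub_conj : ‖z - conj w‖ = ‖w - conj z‖ := by
    rw [← Complex.norm_conj, map_sub, Complex.conj_conj, norm_sub_rev]
  rw [greenG, greenG, norm_sub_rev z w, norm_sub_conj]

theorem harmonicAt_greenG_comp_left {f : ℂ → ℂ} {v w : ℂ} (hf : AnalyticAt ℂ f v)
    (hne : f v ≠ w) (hne_conj : f v ≠ conj w) : HarmonicAt (fun v ↦ greenG (f v) w) v := by
  have harmonicAt_log_norm_sub {a : ℂ} (ha : f v ≠ a) :
      HarmonicAt (fun v ↦ Real.log ‖f v - a‖) v :=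
    (hf.sub analyticAt_const).harmonicAt_log_norm (sub_ne_zero.mpr ha)
  exact (harmonicAt_log_norm_sub hne).neg.sub (harmonicAt_log_norm_sub hne_conj)

theorem harmonicAt_greenG_comp_right {f : ℂ → ℂ} {v w : ℂ} (hf : AnalyticAt ℂ f w)
    (hne : v ≠ f w) (hne_conj : v ≠ conj (f w)) : HarmonicAt (fun w ↦ greenG v (f w)) w := by
  have f_ne_conj : f w ≠ conj v := fun h ↦ hne_conj (by rw [h, Complex.conj_conj])
  simpa only [greenG_comm v] using harmonicAt_greenG_comp_left hf hne.symm f_ne_conj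

theorem green_crossavg_general {f₁ f₂ : ℂ → ℂ} {c₁ c₂ : ℂ} {R₁ R₂ : ℝ}
    (hf₁ : AnalyticOnNhd ℂ f₁ (closedBall c₁ |R₁|))
    (hf₂ : AnalyticOnNhd ℂ f₂ (closedBall c₂ |R₂|))
    (hne : ∀ v ∈ closedBall c₁ |R₁|, ∀ w ∈ closedBall c₂ |R₂|, f₁ v ≠ f₂ w)
    (hne_conj : ∀ v ∈ closedBall c₁ |R₁|, ∀ w ∈ closedBall c₂ |R₂|, f₁ v ≠ conj (f₂ w)) :
    Real.circleAverage (fun v ↦ Real.circleAverage (fun w ↦ greenG (f₁ v) (f₂ w)) c₂ R₂) c₁ R₁ =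
      greenG (f₁ c₁) (f₂ c₂) := by
  refine circleAverage_circleAverage_eq_of_harmonicOnNhd (F := fun v w ↦ greenG (f₁ v) (f₂ w))
    (fun v hv ↦ ?_) (fun v hv w hw ↦ ?_)
  · have hc₂ : c₂ ∈ closedBall c₂ |R₂| := mem_closedBall_self (abs_nonneg R₂)
    exact harmonicAt_greenG_comp_left (hf₁ v hv) (hne v hv c₂ hc₂) (hne_conj v hv c₂ hc₂)
  · have hv' := sphere_subset_closedBall hv
    exact harmonicAt_greenG_comp_right (hf₂ w hw) (hne v hv' w hw) (hne_conj v hv' w hw)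

/-- Cross-term computation from the proof of Lemma 6.4: if `g` is holomorphic
and injective on an open set containing the disjoint closed balls
`closedBall z₁ ε` and `closedBall z₂ ε` (with `|z₁ − z₂| > 2ε`), and maps both
closed balls into `ℍ`, then the double average of `G(g(·), g(·))` over the two
circles `∂B_ε(z₁)`, `∂B_ε(z₂)` equals `G(g(z₁), g(z₂))`. -/
theorem green_crossavg (z₁ z₂ : ℂ) (ε : ℝ) (hε : 0 < ε)
    (hsep : 2 * ε < ‖z₁ - z₂‖)
    (U : Set ℂ) (hU : IsOpen U)
    (hball₁ : Metric.closedBall z₁ ε ⊆ U) (hball₂ : Metric.closedBall z₂ ε ⊆ U)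
    (g : ℂ → ℂ) (hg : DifferentiableOn ℂ g U) (hinj : Set.InjOn g U)
    (him₁ : ∀ v ∈ Metric.closedBall z₁ ε, 0 < (g v).im)
    (him₂ : ∀ v ∈ Metric.closedBall z₂ ε, 0 < (g v).im) :
    (1 / (2 * Real.pi)) ^ 2 * ∫ θ in (0:ℝ)..(2 * Real.pi),
        ∫ φ in (0:ℝ)..(2 * Real.pi),
          greenG (g (z₁ + (ε : ℂ) * Complex.exp ((θ : ℂ) * Complex.I)))
            (g (z₂ + (ε : ℂ) * Complex.exp ((φ : ℂ) * Complex.I)))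
      = greenG (g z₁) (g z₂) := by
  have hdisj : Disjoint (closedBall z₁ ε) (closedBall z₂ ε) :=
    closedBall_disjoint_closedBall (by rwa [← two_mul, dist_eq_norm])
  have hg' : AnalyticOnNhd ℂ g U := hg.analyticOnNhd hU
  rw [← abs_of_pos hε] at hball₁ hball₂ him₁ him₂ hdisj
  refine (circleAverage_circleAverage_eq_smul_integral (fun v w ↦ greenG (g v) (g w))
    z₁ z₂ ε ε).symm.trans (green_crossavg_general (hg'.mono hball₁) (hg'.mono hball₂) ?_ ?_)
  · exact fun v hv w hw ↦ hinj.ne (hball₁ hv) (hball₂ hw) (hdisj.ne_of_mem hv hw)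
  · exact fun v hv w hw ↦ ne_conj_of_im_pos (him₁ v hv) (him₂ w hw)
end
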